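/- For every m ≥ 1 and every m×m matrix (X_{i,j}) with entries in S₀, one has ‖(X_{i,j}) − (ψ_n(φ_n(X_{i,j})))‖ → 0 as n → ∞, where the norm is the operator norm of an m×m operator matrix acting on the direct sum of m copies of ℓ²(ℕ) (equivalently, the C*-norm on M_m(B(ℓ²(ℕ)))). -/

import Mathlib

noncomputable section

open scoped ComplexOrder InnerProductSpace

/-- The Hilbert space ℓ²(ℕ) of square-summable complex sequences. -/
abbrev Hs : Type := lp (fun _ : ℕ => ℂ) 2

/-- The standard orthonormal basis vectors of ℓ²(ℕ) (indexed from 0). -/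
def e (i : ℕ) : Hs := lp.single 2 i 1

/-- The matrix unit `E i j : x ↦ ⟨x, e j⟩ e i`. -/
def E (i j : ℕ) : Hs →L[ℂ] Hs := (innerSL ℂ (e j)).smulRight (e i)

/-- `K₀`: the norm-closed linear span of the matrix units `E i j`, `(i,j) ≠ (0,0)`. -/
def K0 : Submodule ℂ (Hs →L[ℂ] Hs) :=
  (Submodule.span ℂ {T | ∃ i j : ℕ, (i, j) ≠ (0, 0) ∧ T = E i j}).topologicalClosure

/-- The operator system `S₀` spanned by `K₀` and the identity operator. -/
def S0 : Submodule ℂ (Hs →L[ℂ] Hs) := Submodule.span ℂ {(1 : Hs →L[ℂ] Hs)} ⊔ K0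

lemma one_mem_S0 : (1 : Hs →L[ℂ] Hs) ∈ S0 :=
  Submodule.mem_sup_left (Submodule.mem_span_singleton_self _)

/-- The matrix entry `X_{ij} = ⟨X e_j, e_i⟩` of a bounded operator on ℓ²(ℕ). -/
def entry (X : Hs →L[ℂ] Hs) (i j : ℕ) : ℂ := ⟪e i, X (e j)⟫_ℂ

/-- `φ_{n+1}(X) = V_{n+1}* X V_{n+1}`, the upper-left (n+1)×(n+1) corner of `X`. -/
def phi (n : ℕ) (X : Hs →L[ℂ] Hs) : Matrix (Fin (n+1)) (Fin (n+1)) ℂ :=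
  fun i j => entry X i j

/-- `Q_{n+1}`: the projection onto the orthocomplement of the span of `e 0, …, e n`. -/
def Qop (n : ℕ) : Hs →L[ℂ] Hs := 1 - ∑ i : Fin (n+1), E i i

/-- `ψ_{n+1}(Y) = V_{n+1} Y V_{n+1}* + y₀₀ Q_{n+1}`. -/
def psi (n : ℕ) (Y : Matrix (Fin (n+1)) (Fin (n+1)) ℂ) : Hs →L[ℂ] Hs :=
  (∑ i : Fin (n+1), ∑ j : Fin (n+1), Y i j • E i j) + Y 0 0 • Qop n

/-- Positivity in the C*-algebra of m×m matrices over a star ring: `M = N* N`. -/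
def MatPos {A : Type*} [Ring A] [StarRing A] {m : ℕ}
    (M : Matrix (Fin m) (Fin m) A) : Prop :=
  ∃ N : Matrix (Fin m) (Fin m) A, M = N.conjTranspose * N

/-- Complete positivity of a map between star rings: every matrix amplification
preserves positivity. -/
def IsCPfun {A B : Type*} [Ring A] [StarRing A] [Ring B] [StarRing B]
    (θ : A → B) : Prop :=
  ∀ (m : ℕ) (M : Matrix (Fin m) (Fin m) A), MatPos M → MatPos (M.map θ)

/-- The operator on the Hilbert space direct sum of `m` copies of a Hilbert space induced by an
m×m matrix of bounded operators; its norm is the C*-norm on `M_m(B(H))`. -/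
def matOp {m : ℕ} {E' : Type*} [NormedAddCommGroup E'] [InnerProductSpace ℂ E']
    (M : Matrix (Fin m) (Fin m) (E' →L[ℂ] E')) :
    PiLp 2 (fun _ : Fin m => E') →L[ℂ] PiLp 2 (fun _ : Fin m => E') :=
  ((PiLp.continuousLinearEquiv 2 ℂ (fun _ : Fin m => E')).symm.toContinuousLinearMap).comp
    ((ContinuousLinearMap.pi (fun i => ∑ j, (M i j).comp (ContinuousLinearMap.proj j))).comp
      (PiLp.continuousLinearEquiv 2 ℂ (fun _ : Fin m => E')).toContinuousLinearMap)

lemma e_inner (i j : ℕ) : ⟪e i, e j⟫_ℂ = if i = j then 1 else 0 := by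
  unfold e
  rw [lp.inner_single_left]
  by_cases h : i = j
  · subst h; simp
  · simp [h]

lemma E_apply (i j : ℕ) (x : Hs) : E i j x = ⟪e j, x⟫_ℂ • e i := by simp [E]

lemma E_mul (i j k l : ℕ) : E i j * E k l = if j = k then E i l else 0 := by
  ext1 x
  simp only [ContinuousLinearMap.mul_apply, E_apply, inner_smul_right, e_inner]
  split_ifs <;> simp [E_apply]

lemma E_mul_mul (x : Hs →L[ℂ] Hs) (i j : ℕ) : E i i * x * E j j = entry x i j • E i j := by
  ext1 v
  simp only [ContinuousLinearMap.mul_apply, E_apply, map_smul, inner_smul_right, entry,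
    ContinuousLinearMap.smul_apply, smul_smul]
  rw [mul_comm]

def Pn (n : ℕ) : Hs →L[ℂ] Hs := ∑ i : Fin (n+1), E i i

lemma Pn_mul_E (n i j : ℕ) (h : i ≤ n) : Pn n * E i j = E i j := by
  unfold Pn
  rw [Finset.sum_mul, Finset.sum_eq_single (⟨i, by omega⟩ : Fin (n+1))]
  · simp [E_mul]
  · intro b _ hb
    rw [E_mul, if_neg]
    intro h'; apply hb; ext; exact h'
  · simp

lemma E_mul_Pn (n i j : ℕ) (h : j ≤ n) : E i j * Pn n = E i j := by
  unfold Pn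
  rw [Finset.mul_sum, Finset.sum_eq_single (⟨j, by omega⟩ : Fin (n+1))]
  · simp [E_mul]
  · intro b _ hb
    rw [E_mul, if_neg]
    intro h'; apply hb; ext; exact h'.symm
  · simp

lemma Pn_idem (n : ℕ) : Pn n * Pn n = Pn n := by
  conv_lhs => arg 2; unfold Pn
  rw [Finset.mul_sum]
  exact Finset.sum_congr rfl fun i _ => Pn_mul_E n i i (by omega)

lemma Pn_symm (n : ℕ) (x y : Hs) : ⟪Pn n x, y⟫_ℂ = ⟪x, Pn n y⟫_ℂ := by
  simp only [Pn, ContinuousLinearMap.sum_apply, sum_inner, inner_sum, E_apply, inner_smul_left,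
    inner_smul_right, inner_conj_symm]
  exact Finset.sum_congr rfl fun i _ => mul_comm _ _

lemma Pn_norm (n : ℕ) : ‖Pn n‖ ≤ 1 := by
  refine ContinuousLinearMap.opNorm_le_bound _ zero_le_one fun x => ?_
  have h : ⟪Pn n x, Pn n x⟫_ℂ = ⟪x, Pn n x⟫_ℂ := by
    rw [Pn_symm, ← ContinuousLinearMap.mul_apply, Pn_idem]
  have h2 : ‖Pn n x‖ * ‖Pn n x‖ ≤ ‖x‖ * ‖Pn n x‖ := by
    have h3 := norm_inner_le_norm (𝕜 := ℂ) x (Pn n x)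
    rw [← h, inner_self_eq_norm_sq_to_K] at h3
    simpa [sq] using h3
  by_cases h0 : ‖Pn n x‖ = 0
  · rw [h0]; positivity
  · rw [one_mul]
    exact le_of_mul_le_mul_right h2 (lt_of_le_of_ne (norm_nonneg _) (Ne.symm h0))

lemma psi_phi (n : ℕ) (x : Hs →L[ℂ] Hs) :
    psi n (phi n x) = Pn n * x * Pn n + entry x 0 0 • (1 - Pn n) := by
  unfold psi phi Qop
  congr 1
  simp only [Pn, Finset.sum_mul, Finset.mul_sum, E_mul_mul]
  exact Finset.sum_comm

def Fn (n : ℕ) : (Hs →L[ℂ] Hs) →ₗ[ℂ] (Hs →L[ℂ] Hs) where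
  toFun x := x - psi n (phi n x)
  map_add' x y := by
    simp only [psi_phi, entry, ContinuousLinearMap.add_apply, inner_add_right, mul_add, add_mul,
      add_smul]
    abel
  map_smul' c x := by
    simp only [psi_phi, entry, ContinuousLinearMap.smul_apply, inner_smul_right, mul_smul_comm,
      smul_mul_assoc, mul_smul, smul_sub, smul_add, RingHom.id_apply]

lemma Fn_apply (n : ℕ) (x : Hs →L[ℂ] Hs) :
    Fn n x = x - (Pn n * x * Pn n + entry x 0 0 • (1 - Pn n)) := by
  rw [← psi_phi]; rfl

lemma e_norm (i : ℕ) : ‖e i‖ = 1 := by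
  have := inner_self_eq_norm_sq (𝕜 := ℂ) (e i)
  rw [e_inner, if_pos rfl] at this
  have h : ‖e i‖ ^ 2 = 1 := by simpa using this.symm
  nlinarith [norm_nonneg (e i)]

lemma entry_norm (x : Hs →L[ℂ] Hs) (i j : ℕ) : ‖entry x i j‖ ≤ ‖x‖ := by
  have h1 := norm_inner_le_norm (𝕜 := ℂ) (e i) (x (e j))
  have h2 := x.le_opNorm (e j)
  rw [e_norm, one_mul] at h1
  rw [e_norm, mul_one] at h2
  exact h1.trans h2

lemma Fn_norm (n : ℕ) (x : Hs →L[ℂ] Hs) : ‖Fn n x‖ ≤ 4 * ‖x‖ := by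
  rw [Fn_apply]
  have hP := Pn_norm n
  have h1 : ‖Pn n * x * Pn n‖ ≤ ‖x‖ := by
    calc _ ≤ ‖Pn n‖ * ‖x‖ * ‖Pn n‖ := (norm_mul_le _ _).trans (by gcongr; exact norm_mul_le _ _)
      _ ≤ 1 * ‖x‖ * 1 := by gcongr
      _ = _ := by ring
  have h2 : ‖(1 : Hs →L[ℂ] Hs) - Pn n‖ ≤ 2 := by
    have := norm_sub_le (1 : Hs →L[ℂ] Hs) (Pn n)
    have h3 : ‖(1 : Hs →L[ℂ] Hs)‖ ≤ 1 := ContinuousLinearMap.norm_id_le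
    linarith
  have h3 : ‖entry x 0 0 • (1 - Pn n)‖ ≤ ‖x‖ * 2 := by
    rw [norm_smul]
    exact mul_le_mul (entry_norm x 0 0) h2 (norm_nonneg _) (norm_nonneg _)
  have h4 := norm_sub_le x (Pn n * x * Pn n + entry x 0 0 • (1 - Pn n))
  have h5 := norm_add_le (Pn n * x * Pn n) (entry x 0 0 • (1 - Pn n))
  linarith

lemma Fn_one (n : ℕ) : Fn n 1 = 0 := by
  rw [Fn_apply, mul_one, Pn_idem]
  simp [entry, e_norm]

lemma Fn_E (n i j : ℕ) (h : (i, j) ≠ (0, 0)) (hi : i ≤ n) (hj : j ≤ n) : Fn n (E i j) = 0 := by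
  rw [Fn_apply, Pn_mul_E n i j hi, E_mul_Pn n i j hj]
  have : entry (E i j) 0 0 = 0 := by
    simp only [entry, E_apply, inner_smul_right, e_inner]
    split_ifs <;> simp_all
  simp [this]

lemma tendsto_span (x : Hs →L[ℂ] Hs)
    (hx : x ∈ Submodule.span ℂ {T | ∃ i j : ℕ, (i, j) ≠ (0, 0) ∧ T = E i j}) :
    ∀ᶠ n in Filter.atTop, Fn n x = 0 := by
  induction hx using Submodule.span_induction with
  | mem x h =>
    obtain ⟨i, j, h, rfl⟩ := h
    filter_upwards [Filter.eventually_ge_atTop i, Filter.eventually_ge_atTop j] with n hi hj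
    exact Fn_E n i j h hi hj
  | zero => simp
  | add x y _ _ hx hy =>
    filter_upwards [hx, hy] with n h1 h2
    rw [map_add, h1, h2, add_zero]
  | smul c x _ hx =>
    filter_upwards [hx] with n h1
    rw [map_smul, h1, smul_zero]

lemma tendsto_K0 (x : Hs →L[ℂ] Hs) (hx : x ∈ K0) :
    Filter.Tendsto (fun n => Fn n x) Filter.atTop (nhds 0) := by
  rw [Metric.tendsto_nhds]
  intro ε hε
  obtain ⟨y, hy, hxy⟩ := Metric.mem_closure_iff.1 hx (ε / 4) (by positivity)
  filter_upwards [tendsto_span y hy] with n hn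
  have h1 : Fn n x = Fn n (x - y) := by rw [map_sub, hn, sub_zero]
  rw [dist_eq_norm] at hxy
  rw [dist_zero_right, h1]
  linarith [Fn_norm n (x - y)]

lemma tendsto_S0 (x : Hs →L[ℂ] Hs) (hx : x ∈ S0) :
    Filter.Tendsto (fun n => Fn n x) Filter.atTop (nhds 0) := by
  obtain ⟨a, ha, b, hb, rfl⟩ := Submodule.mem_sup.1 hx
  obtain ⟨c, rfl⟩ := Submodule.mem_span_singleton.1 ha
  simpa [Fn_one] using tendsto_K0 b hb

lemma matOp_eq {m : ℕ} (M : Matrix (Fin m) (Fin m) (Hs →L[ℂ] Hs)) :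
    matOp M = ∑ i, ∑ j,
      (((PiLp.continuousLinearEquiv 2 ℂ (fun _ : Fin m => Hs)).symm.toContinuousLinearMap).comp
        (ContinuousLinearMap.single ℂ (fun _ : Fin m => Hs) i)).comp
      ((M i j).comp ((ContinuousLinearMap.proj j).comp
        (PiLp.continuousLinearEquiv 2 ℂ (fun _ : Fin m => Hs)).toContinuousLinearMap)) := by
  ext1 v
  apply (PiLp.continuousLinearEquiv 2 ℂ (fun _ : Fin m => Hs)).injective
  funext k
  simp only [matOp, ContinuousLinearMap.sum_apply, map_sum, ContinuousLinearMap.comp_apply,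
    ContinuousLinearEquiv.coe_coe, ContinuousLinearEquiv.apply_symm_apply, Finset.sum_apply,
    ContinuousLinearMap.single_apply, ContinuousLinearMap.pi_apply, ContinuousLinearMap.proj_apply]
  rw [Finset.sum_comm]
  refine Finset.sum_congr rfl fun j _ => ?_
  rw [Finset.sum_pi_single]
  simp

lemma tendsto_sum_zero_aux {m : ℕ} {A : Type*} [NormedAddCommGroup A] (f : Fin m → ℕ → A)
    (h : ∀ i, Filter.Tendsto (f i) Filter.atTop (nhds 0)) :
    Filter.Tendsto (fun n => ∑ i, f i n) Filter.atTop (nhds 0) := by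
  have := tendsto_finset_sum (Finset.univ : Finset (Fin m)) fun i _ => h i
  simpa using this

lemma tendsto_comp_aux {A B : Type*} [NormedAddCommGroup A] [NormedSpace ℂ A]
    [NormedAddCommGroup B] [NormedSpace ℂ B] (a : Hs →L[ℂ] A) (b : B →L[ℂ] Hs)
    (f : ℕ → (Hs →L[ℂ] Hs)) (h : Filter.Tendsto f Filter.atTop (nhds 0)) :
    Filter.Tendsto (fun n => a.comp ((f n).comp b)) Filter.atTop (nhds 0) := by
  have hc : Continuous (fun T : Hs →L[ℂ] Hs => a.comp (T.comp b)) :=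
    continuous_const.clm_comp (continuous_id.clm_comp continuous_const)
  have := (hc.tendsto 0).comp h
  simpa [Function.comp_def] using this

/-- for every `m ≥ 1` and every m×m matrix with entries in `S₀`, the matrix of
operators `(X_{i,j} − ψ_n(φ_n(X_{i,j})))` tends to `0` in the operator norm of an m×m operator
matrix acting on the direct sum of m copies of ℓ²(ℕ). -/
theorem stmt_2 (m : ℕ) (hm : 1 ≤ m) (X : Matrix (Fin m) (Fin m) (Hs →L[ℂ] Hs))
    (hX : ∀ i j, X i j ∈ S0) :
    Filter.Tendsto (fun n : ℕ => ‖matOp (X.map (fun x => x - psi n (phi n x)))‖)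
      Filter.atTop (nhds 0) := by
  have key : Filter.Tendsto (fun n : ℕ => matOp (X.map (fun x => x - psi n (phi n x))))
      Filter.atTop (nhds 0) := by
    simp only [matOp_eq, Matrix.map_apply]
    refine tendsto_sum_zero_aux _ fun i => ?_
    refine tendsto_sum_zero_aux _ fun j => ?_
    have h := tendsto_S0 _ (hX i j)
    exact tendsto_comp_aux _ _ _ h
  simpa using key.norm
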